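/- arXiv:2010.11643 — 7 statements merged into one kernel-verified Lean document; each statement's English description precedes it below -/
import Mathlib

section
/- Let p be a strictly positive probability distribution on a chain of n sites, and for 1 ≤ ℓ ≤ n−2 let p^ℓ be the associated (ℓ+1)-local Gibbs distribution. Then the relative entropy satisfies the exact identity S(p ‖ p^ℓ) = Σ_{k=1}^{n−ℓ−1} I(1,…,k : k+ℓ+1 | k+1,…,k+ℓ), where each summand is the conditional mutual information of p between the block {1,…,k} and the single site {k+ℓ+1} conditioned on the block {k+1,…,k+ℓ}. -/
/-!
The normalisation of `p^ℓ` is trivial: its partition function equals `1`. Indeed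
`e^{-h^ℓ}` is the product of `p_{0,…,ℓ}` and of the conditional probabilities
`p_{m+1,…,m+1+ℓ} / p_{m+1,…,m+ℓ}` of the site `m+1+ℓ` given the `ℓ` sites before it, i.e. the
law of an `ℓ`-step Markov chain. Summing over the last site removes the last factor
(`sum_mul_fullMargin_insert`). All functions here live on full configurations, so dropping the
site `i` costs a factor `|X i|`; the sums `∑ x, p_{0,…,k+ℓ}(x)` lose the same factors, and
comparing the two recursions (`sum_markovWeight`) shows that the partition function is
`∑ x, p x = 1`.

Consequently `log (p / p^ℓ) = log p + h^ℓ`. Its mean under `p` is a signed sum of block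
entropies (`blockEntropy_eq`), and the sum of conditional mutual informations telescopes to the
same expression (`sum_cmi_telescope`).
-/

open scoped BigOperators

noncomputable section

variable {n : ℕ} {X : Fin n → Type*}

/-- The marginal of `p` on the block `S`, as a function of a configuration of the block:
`p_S(y) = Σ_{z : z|_S = y} p(z)`. -/
def blockMargin [∀ i, Fintype (X i)] [∀ i, DecidableEq (X i)]
    (p : (∀ i, X i) → ℝ) (S : Finset (Fin n)) (y : ∀ i : S, X i) : ℝ :=
  ∑ z : ∀ i, X i, if ∀ i : S, z i.1 = y i then p z else 0

/-- The Shannon entropy (natural logarithm) of the marginal of `p` on the block `S`. -/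
def blockEntropy [∀ i, Fintype (X i)] [∀ i, DecidableEq (X i)]
    (p : (∀ i, X i) → ℝ) (S : Finset (Fin n)) : ℝ :=
  -∑ y : ∀ i : S, X i, blockMargin p S y * Real.log (blockMargin p S y)

/-- The conditional mutual information `I(A:C|B) = H(AB) + H(BC) − H(B) − H(ABC)`
of the distribution `p`. -/
def cmi [∀ i, Fintype (X i)] [∀ i, DecidableEq (X i)]
    (p : (∀ i, X i) → ℝ) (A B C : Finset (Fin n)) : ℝ :=
  blockEntropy p (A ∪ B) + blockEntropy p (B ∪ C) - blockEntropy p B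
    - blockEntropy p (A ∪ B ∪ C)

/-- The marginal of `p` on `S`, evaluated at the restriction of a full configuration `x`. -/
def fullMargin [∀ i, Fintype (X i)] [∀ i, DecidableEq (X i)]
    (p : (∀ i, X i) → ℝ) (S : Finset (Fin n)) (x : ∀ i, X i) : ℝ :=
  ∑ z : ∀ i, X i, if ∀ i ∈ S, z i = x i then p z else 0

/-- The contiguous block `{a, …, b}` of sites (`0`-indexed). -/
def chainInterval (n : ℕ) (a b : ℕ) : Finset (Fin n) :=
  Finset.univ.filter fun i => a ≤ (i : ℕ) ∧ (i : ℕ) ≤ b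

/-- The `(ℓ+1)`-local Hamiltonian
`h^ℓ = Σ_{j=1}^{n−ℓ} h_{j,…,j+ℓ} − Σ_{j=1}^{n−ℓ−1} h_{j+1,…,j+ℓ}` (with sites `0`-indexed
here), where `h_{j,…,k} := −log p_{j,…,k}`. -/
def localHam [∀ i, Fintype (X i)] [∀ i, DecidableEq (X i)]
    (p : (∀ i, X i) → ℝ) (ℓ : ℕ) (x : ∀ i, X i) : ℝ :=
  (∑ m ∈ Finset.range (n - ℓ), -Real.log (fullMargin p (chainInterval n m (m + ℓ)) x))
    - ∑ m ∈ Finset.range (n - ℓ - 1),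
        -Real.log (fullMargin p (chainInterval n (m + 1) (m + ℓ)) x)

/-- The `(ℓ+1)`-local Gibbs distribution `p^ℓ(x) = e^{−h^ℓ(x)} / Σ_{x'} e^{−h^ℓ(x')}`. -/
def gibbsApprox [∀ i, Fintype (X i)] [∀ i, DecidableEq (X i)]
    (p : (∀ i, X i) → ℝ) (ℓ : ℕ) (x : ∀ i, X i) : ℝ :=
  Real.exp (-localHam p ℓ x) / ∑ x' : ∀ i, X i, Real.exp (-localHam p ℓ x')

/-- The relative entropy `S(p‖q) = Σ_x p(x) log (p(x)/q(x))` (natural logarithm). -/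
def relEnt [∀ i, Fintype (X i)] (p q : (∀ i, X i) → ℝ) : ℝ :=
  ∑ x : ∀ i, X i, p x * Real.log (p x / q x)

/-! ### Marginals and entropies on full configurations -/

lemma sum_sum_update [∀ i, Fintype (X i)] (f : (∀ i, X i) → ℝ) (i : Fin n) :
    ∑ x, ∑ a, f (Function.update x i a) = (Fintype.card (X i) : ℝ) * ∑ x, f x := by
  -- Exchanging `a` with the `i`-th coordinate of `x` is an involution of the pairs `(x, a)`.
  have h : ∑ q : (∀ i, X i) × X i, f (Function.update q.1 i q.2) =
      ∑ q : (∀ i, X i) × X i, f q.1 := by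
    refine Finset.sum_nbij' (fun q => (Function.update q.1 i q.2, q.1 i))
      (fun q => (Function.update q.1 i q.2, q.1 i)) ?_ ?_ ?_ ?_ ?_ <;> simp
  rw [Fintype.sum_prod_type, Fintype.sum_prod_type] at h
  rw [h]
  simp [Finset.mul_sum]

section
variable [∀ i, Fintype (X i)] [∀ i, DecidableEq (X i)]

lemma fullMargin_pos (p : (∀ i, X i) → ℝ) (hpos : ∀ x, 0 < p x)
    (S : Finset (Fin n)) (x : ∀ i, X i) : 0 < fullMargin p S x := by
  unfold fullMargin
  refine Finset.sum_pos' (fun z _ => ?_) ⟨x, Finset.mem_univ _, ?_⟩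
  · split_ifs
    · exact (hpos z).le
    · exact le_rfl
  · simpa using hpos x

lemma fullMargin_update (p : (∀ i, X i) → ℝ) {S : Finset (Fin n)} {i : Fin n} (hi : i ∉ S)
    (x : ∀ i, X i) (a : X i) :
    fullMargin p S (Function.update x i a) = fullMargin p S x := by
  unfold fullMargin
  refine Finset.sum_congr rfl fun z _ => ?_
  have h : (∀ j ∈ S, z j = Function.update x i a j) ↔ ∀ j ∈ S, z j = x j := by
    refine forall₂_congr fun j hj => ?_
    rw [Function.update_of_ne (by rintro rfl; exact hi hj)]
  simp only [h]

lemma fullMargin_univ (p : (∀ i, X i) → ℝ) (x : ∀ i, X i) :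
    fullMargin p Finset.univ x = p x := by
  simp [fullMargin, ← funext_iff]

/-- The entropy of a block as a mean over full configurations:
`H(p_S) = -∑ x, p x * log p_S(x|_S)`. -/
lemma blockEntropy_eq (p : (∀ i, X i) → ℝ) (S : Finset (Fin n)) :
    blockEntropy p S = -∑ x, p x * Real.log (fullMargin p S x) := by
  have hb : ∀ x : ∀ i, X i, blockMargin p S (fun i => x i.1) = fullMargin p S x := by
    intro x
    simp only [blockMargin, fullMargin, Subtype.forall]
  unfold blockEntropy
  congr 1
  simp only [← hb]
  have h1 : ∀ y : ∀ i : S, X i, blockMargin p S y * Real.log (blockMargin p S y) =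
      ∑ x : ∀ i, X i, if (fun i : S => x i.1) = y then
        p x * Real.log (blockMargin p S (fun i => x i.1)) else 0 := by
    intro y
    conv_lhs => enter [1]; unfold blockMargin
    rw [Finset.sum_mul]
    refine Finset.sum_congr rfl fun x _ => ?_
    simp only [funext_iff]
    split_ifs with h
    · rw [show (fun i : S => x i.1) = y from funext h]
    · simp
  simp only [h1]
  rw [Finset.sum_comm]
  simp

lemma sum_fullMargin_insert (p : (∀ i, X i) → ℝ) {S : Finset (Fin n)} {i : Fin n} (hi : i ∉ S)
    (x : ∀ i, X i) :
    ∑ a, fullMargin p (insert i S) (Function.update x i a) = fullMargin p S x := by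
  unfold fullMargin
  rw [Finset.sum_comm]
  refine Finset.sum_congr rfl fun z _ => ?_
  have h : ∀ a, (∀ j ∈ insert i S, z j = Function.update x i a j) ↔
      (z i = a ∧ ∀ j ∈ S, z j = x j) := by
    intro a
    rw [Finset.forall_mem_insert, Function.update_self]
    refine and_congr_right fun _ => forall₂_congr fun j hj => ?_
    rw [Function.update_of_ne (by rintro rfl; exact hi hj)]
  simp only [h, ite_and]
  simp

/-- Summing out a site `i ∉ S` against a weight `G` that does not depend on it. The factor
`|X i|` appears because both sums run over full configurations. -/
lemma sum_mul_fullMargin_insert (p : (∀ i, X i) → ℝ) {S : Finset (Fin n)} {i : Fin n}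
    (hi : i ∉ S) (G : (∀ i, X i) → ℝ) (hG : ∀ x a, G (Function.update x i a) = G x) :
    (Fintype.card (X i) : ℝ) * ∑ x, G x * fullMargin p (insert i S) x =
      ∑ x, G x * fullMargin p S x := by
  rw [← sum_sum_update]
  refine Finset.sum_congr rfl fun x _ => ?_
  simp only [hG, ← Finset.mul_sum, sum_fullMargin_insert p hi]

/-! ### The partition function -/

/-- The law `p_{0,…,ℓ} ∏_{m<k} p_{m+1,…,m+1+ℓ} / p_{m+1,…,m+ℓ}` of the `ℓ`-step Markov chain on
the sites `0, …, k+ℓ` built from the marginals of `p`, viewed as a function of a full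
configuration. -/
def markovWeight (p : (∀ i, X i) → ℝ) (ℓ k : ℕ) (x : ∀ i, X i) : ℝ :=
  fullMargin p (chainInterval n 0 ℓ) x *
    ∏ m ∈ Finset.range k, fullMargin p (chainInterval n (m + 1) (m + 1 + ℓ)) x /
      fullMargin p (chainInterval n (m + 1) (m + ℓ)) x

lemma markovWeight_update (p : (∀ i, X i) → ℝ) {ℓ k : ℕ} {i : Fin n} (hi : k + ℓ < (i : ℕ))
    (x : ∀ i, X i) (a : X i) :
    markovWeight p ℓ k (Function.update x i a) = markovWeight p ℓ k x := by
  unfold markovWeight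
  rw [fullMargin_update p (by simp [chainInterval]; omega)]
  congr 1
  refine Finset.prod_congr rfl fun m hm => ?_
  have := Finset.mem_range.1 hm
  rw [fullMargin_update p (by simp [chainInterval]; omega),
    fullMargin_update p (by simp [chainInterval]; omega)]

lemma insert_chainInterval {a b : ℕ} (hab : a ≤ b + 1) (hb : b + 1 < n) :
    insert (⟨b + 1, hb⟩ : Fin n) (chainInterval n a b) = chainInterval n a (b + 1) := by
  ext j
  simp only [chainInterval, Finset.mem_insert, Finset.mem_filter, Finset.mem_univ, true_and,
    Fin.ext_iff]
  omega

lemma notMem_chainInterval {a b : ℕ} (hb : b + 1 < n) :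
    (⟨b + 1, hb⟩ : Fin n) ∉ chainInterval n a b := by
  simp [chainInterval]

/-- The Markov weights and the marginals on initial blocks have the same total mass: when `k`
increases by one, both sums are divided by `|X (k+ℓ+1)|`. -/
lemma sum_markovWeight [∀ i, Nonempty (X i)] (p : (∀ i, X i) → ℝ) (hpos : ∀ x, 0 < p x)
    (ℓ k : ℕ) (hk : k + ℓ < n) :
    ∑ x, markovWeight p ℓ k x = ∑ x, fullMargin p (chainInterval n 0 (k + ℓ)) x := by
  induction k with
  | zero => simp [markovWeight]
  | succ k ih =>
    have hb : k + ℓ + 1 < n := by omega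
    specialize ih (by omega)
    have h1 := sum_mul_fullMargin_insert p (notMem_chainInterval (a := k + 1) hb)
      (fun x => markovWeight p ℓ k x / fullMargin p (chainInterval n (k + 1) (k + ℓ)) x)
      (fun x a => by
        rw [markovWeight_update p (by simp),
          fullMargin_update p (notMem_chainInterval hb)])
    have h2 := sum_mul_fullMargin_insert p (notMem_chainInterval (a := 0) hb)
      (fun _ => 1) (fun _ _ => rfl)
    rw [insert_chainInterval (by omega) hb] at h1 h2
    simp only [one_mul] at h2
    have h3 : ∀ x, markovWeight p ℓ (k + 1) x =
        markovWeight p ℓ k x / fullMargin p (chainInterval n (k + 1) (k + ℓ)) x *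
          fullMargin p (chainInterval n (k + 1) (k + ℓ + 1)) x := by
      intro x
      unfold markovWeight
      rw [Finset.prod_range_succ, show k + 1 + ℓ = k + ℓ + 1 by omega]
      ring
    have h4 : ∀ x, markovWeight p ℓ k x / fullMargin p (chainInterval n (k + 1) (k + ℓ)) x *
        fullMargin p (chainInterval n (k + 1) (k + ℓ)) x = markovWeight p ℓ k x :=
      fun x => div_mul_cancel₀ _ (fullMargin_pos p hpos _ x).ne'
    simp only [← h3, h4] at h1
    have hc : (Fintype.card (X ⟨k + ℓ + 1, hb⟩) : ℝ) ≠ 0 := by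
      exact_mod_cast Fintype.card_ne_zero
    rw [show k + 1 + ℓ = k + ℓ + 1 by omega]
    exact mul_left_cancel₀ hc (by rw [h1, h2, ih])

lemma exp_neg_localHam (p : (∀ i, X i) → ℝ) (hpos : ∀ x, 0 < p x) {ℓ : ℕ} (hℓ : ℓ < n)
    (x : ∀ i, X i) :
    Real.exp (-localHam p ℓ x) = markovWeight p ℓ (n - ℓ - 1) x := by
  have hF := fun S => fullMargin_pos p hpos S x
  have hM : 0 < markovWeight p ℓ (n - ℓ - 1) x :=
    mul_pos (hF _) (Finset.prod_pos fun m _ => div_pos (hF _) (hF _))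
  rw [← Real.exp_log hM]
  congr 1
  unfold markovWeight localHam
  rw [Real.log_mul (hF _).ne' (Finset.prod_pos fun m _ => div_pos (hF _) (hF _)).ne',
    Real.log_prod (fun m _ => (div_pos (hF _) (hF _)).ne')]
  simp only [Real.log_div (hF _).ne' (hF _).ne', Finset.sum_sub_distrib, Finset.sum_neg_distrib]
  obtain ⟨N, hN⟩ : ∃ N, n - ℓ = N + 1 := ⟨n - ℓ - 1, by omega⟩
  rw [hN, Finset.sum_range_succ', Nat.add_sub_cancel, Nat.zero_add]
  ring

/-- The partition function of the local Hamiltonian is `1`. -/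
lemma sum_exp_neg_localHam [∀ i, Nonempty (X i)] (p : (∀ i, X i) → ℝ) (hpos : ∀ x, 0 < p x)
    (hsum : ∑ x : ∀ i, X i, p x = 1) {ℓ : ℕ} (hℓ : ℓ < n) :
    ∑ x : ∀ i, X i, Real.exp (-localHam p ℓ x) = 1 := by
  simp only [exp_neg_localHam p hpos hℓ]
  rw [sum_markovWeight p hpos _ _ (by omega)]
  have : chainInterval n 0 (n - ℓ - 1 + ℓ) = Finset.univ := by
    ext j
    simp only [chainInterval, Finset.mem_filter, Finset.mem_univ, true_and, iff_true]
    omega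
  simp only [this, fullMargin_univ, hsum]

/-! ### Mean energy and telescoping entropies -/

lemma sum_mul_localHam (p : (∀ i, X i) → ℝ) (ℓ : ℕ) :
    ∑ x, p x * localHam p ℓ x =
      ∑ m ∈ Finset.range (n - ℓ), blockEntropy p (chainInterval n m (m + ℓ)) -
        ∑ m ∈ Finset.range (n - ℓ - 1), blockEntropy p (chainInterval n (m + 1) (m + ℓ)) := by
  simp only [localHam, mul_sub, Finset.sum_sub_distrib, Finset.mul_sum, blockEntropy_eq]
  congr 1 <;> rw [Finset.sum_comm] <;> simp

lemma cmi_eq (p : (∀ i, X i) → ℝ) {ℓ : ℕ} (hℓ : 1 ≤ ℓ) (m : ℕ) :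
    cmi p (Finset.univ.filter fun i : Fin n => (i : ℕ) < 1 + m)
      (Finset.univ.filter fun i : Fin n => 1 + m ≤ (i : ℕ) ∧ (i : ℕ) < 1 + m + ℓ)
      (Finset.univ.filter fun i : Fin n => (i : ℕ) = 1 + m + ℓ) =
    blockEntropy p (chainInterval n 0 (m + ℓ)) +
      blockEntropy p (chainInterval n (m + 1) (m + 1 + ℓ)) -
      blockEntropy p (chainInterval n (m + 1) (m + ℓ)) -
      blockEntropy p (chainInterval n 0 (m + 1 + ℓ)) := by
  unfold cmi
  have hAB : (Finset.univ.filter fun i : Fin n => (i : ℕ) < 1 + m) ∪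
      (Finset.univ.filter fun i : Fin n => 1 + m ≤ (i : ℕ) ∧ (i : ℕ) < 1 + m + ℓ) =
      chainInterval n 0 (m + ℓ) := by
    ext j
    simp only [chainInterval, Finset.mem_union, Finset.mem_filter, Finset.mem_univ, true_and]
    omega
  have hBC : (Finset.univ.filter fun i : Fin n => 1 + m ≤ (i : ℕ) ∧ (i : ℕ) < 1 + m + ℓ) ∪
      (Finset.univ.filter fun i : Fin n => (i : ℕ) = 1 + m + ℓ) =
      chainInterval n (m + 1) (m + 1 + ℓ) := by
    ext j
    simp only [chainInterval, Finset.mem_union, Finset.mem_filter, Finset.mem_univ, true_and]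
    omega
  have hB : (Finset.univ.filter fun i : Fin n => 1 + m ≤ (i : ℕ) ∧ (i : ℕ) < 1 + m + ℓ) =
      chainInterval n (m + 1) (m + ℓ) := by
    ext j
    simp only [chainInterval, Finset.mem_filter, Finset.mem_univ, true_and]
    omega
  have hABC : chainInterval n 0 (m + ℓ) ∪
      (Finset.univ.filter fun i : Fin n => (i : ℕ) = 1 + m + ℓ) =
      chainInterval n 0 (m + 1 + ℓ) := by
    ext j
    simp only [chainInterval, Finset.mem_union, Finset.mem_filter, Finset.mem_univ, true_and]
    omega
  rw [hAB, hBC, hB, hABC]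

/-- In the sum of conditional mutual informations the entropies of the initial blocks
telescope. -/
lemma sum_cmi_telescope (p : (∀ i, X i) → ℝ) {ℓ : ℕ} (hℓ : 1 ≤ ℓ) (N : ℕ) :
    ∑ m ∈ Finset.range N,
      cmi p (Finset.univ.filter fun i : Fin n => (i : ℕ) < 1 + m)
        (Finset.univ.filter fun i : Fin n => 1 + m ≤ (i : ℕ) ∧ (i : ℕ) < 1 + m + ℓ)
        (Finset.univ.filter fun i : Fin n => (i : ℕ) = 1 + m + ℓ) =
    ∑ m ∈ Finset.range (N + 1), blockEntropy p (chainInterval n m (m + ℓ)) -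
      ∑ m ∈ Finset.range N, blockEntropy p (chainInterval n (m + 1) (m + ℓ)) -
      blockEntropy p (chainInterval n 0 (N + ℓ)) := by
  simp only [cmi_eq p hℓ]
  induction N with
  | zero => simp
  | succ N ih =>
    rw [Finset.sum_range_succ, ih, Finset.sum_range_succ _ (N + 1),
      Finset.sum_range_succ (fun m => blockEntropy p (chainInterval n (m + 1) (m + ℓ)))]
    ring

end

/-- for a strictly positive distribution `p` on a chain of `n` sites and
`1 ≤ ℓ ≤ n−2`, the relative entropy between `p` and its `(ℓ+1)`-local Gibbs approximation
equals the sum of the conditional mutual informations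
`Σ_{k=1}^{n−ℓ−1} I(1,…,k : k+ℓ+1 | k+1,…,k+ℓ)` (sites `1`-indexed in this formula,
`0`-indexed in the formalization). -/
theorem relEnt_gibbsApprox_eq_sum_cmi {n : ℕ} {X : Fin n → Type*}
    [∀ i, Fintype (X i)] [∀ i, DecidableEq (X i)] [∀ i, Nonempty (X i)]
    (p : (∀ i, X i) → ℝ) (hpos : ∀ x, 0 < p x) (hsum : ∑ x : ∀ i, X i, p x = 1)
    (ℓ : ℕ) (hℓ1 : 1 ≤ ℓ) (hℓ2 : ℓ ≤ n - 2) :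
    relEnt p (gibbsApprox p ℓ) =
      ∑ k ∈ Finset.Icc 1 (n - ℓ - 1),
        cmi p (Finset.univ.filter fun i : Fin n => (i : ℕ) < k)
          (Finset.univ.filter fun i : Fin n => k ≤ (i : ℕ) ∧ (i : ℕ) < k + ℓ)
          (Finset.univ.filter fun i : Fin n => (i : ℕ) = k + ℓ) := by
  have hn : ℓ < n := by omega
  have hlog : ∀ x, p x * Real.log (p x / gibbsApprox p ℓ x) =
      p x * Real.log (fullMargin p Finset.univ x) + p x * localHam p ℓ x := by
    intro x
    rw [gibbsApprox, sum_exp_neg_localHam p hpos hsum hn, div_one,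
      Real.log_div (hpos x).ne' (Real.exp_pos _).ne', Real.log_exp, fullMargin_univ]
    ring
  have huniv : chainInterval n 0 (n - ℓ - 1 + ℓ) = Finset.univ := by
    ext j
    simp only [chainInterval, Finset.mem_filter, Finset.mem_univ, true_and, iff_true]
    omega
  have hIcc : Finset.Icc 1 (n - ℓ - 1) = Finset.Ico 1 (n - ℓ) := by
    ext k
    simp only [Finset.mem_Icc, Finset.mem_Ico]
    omega
  have hE := blockEntropy_eq p Finset.univ
  rw [hIcc, Finset.sum_Ico_eq_sum_range, sum_cmi_telescope p hℓ1, huniv, relEnt]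
  simp only [hlog]
  rw [Finset.sum_add_distrib, sum_mul_localHam, show n - ℓ - 1 + 1 = n - ℓ by omega]
  linarith

end
end

section
/- Let {A_x}_{x=0}^{d−1} be linear operators on a finite-dimensional complex Hilbert space H. Then {A_x} satisfies the purity condition if and only if the following holds: for every nonzero linear operator O on H such that for every N ≥ 1 and every word (x_1,…,x_N) ∈ {0,…,d−1}^N there exists a scalar c (depending on the word) with O† A_{x_1}† ⋯ A_{x_N}† A_{x_N} ⋯ A_{x_1} O = c · O†O, the operator O has rank 1. -/
/-!
An orthogonal projection satisfies `Pᴴ * P = P`, so the operator condition applied to `O = P`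
contains the purity condition. Conversely, given `O`, let `P` be the orthogonal projection onto the
range of `O`. By `exists_range_projection`, `P = O * X` for some `X` and `P * O = O`, so `P` and `O`
have equal rank, and multiplying the relation for `O` by `Xᴴ` on the left and `X` on the right gives
`P * W * P = c • P`. Purity then forces `P`, hence `O`, to have rank one.
-/

open scoped BigOperators ComplexOrder
open Matrix

noncomputable section
attribute [local instance] Classical.propDecidable

/-- The ordered product `A_{x_N} ⋯ A_{x_1}` associated to a word `x = (x_1, …, x_N)`
(here `x i` is letter number `i+1` of the word). -/
def wordProd {D d N : ℕ} (A : Fin d → Matrix (Fin D) (Fin D) ℂ)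
    (x : Fin N → Fin d) : Matrix (Fin D) (Fin D) ℂ :=
  ((List.ofFn fun i => A (x i)).reverse).prod

/-- The purity condition of Benoist et al.: any nonzero orthogonal projection `P` with
`P A_{x_1}† ⋯ A_{x_N}† A_{x_N} ⋯ A_{x_1} P ∝ P` for all words has rank one. -/
def PurityCondition {D d : ℕ} (A : Fin d → Matrix (Fin D) (Fin D) ℂ) : Prop :=
  ∀ P : Matrix (Fin D) (Fin D) ℂ,
    P.IsHermitian → P * P = P → P ≠ 0 →
    (∀ N : ℕ, 0 < N → ∀ x : Fin N → Fin d,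
      ∃ c : ℂ, P * ((wordProd A x)ᴴ * wordProd A x) * P = c • P) →
    P.rank = 1

/-- The orthogonal projection `P` onto the column space of `O` factors as `P = O * X`, which is
what lets the proportionality relations for `O` be multiplied into relations for `P`. -/
lemma exists_range_projection {D : ℕ} (O : Matrix (Fin D) (Fin D) ℂ) :
    ∃ P X : Matrix (Fin D) (Fin D) ℂ, P.IsHermitian ∧ P * P = P ∧ P * O = O ∧ P = O * X := by
  let e := Matrix.toEuclideanCLM (n := Fin D) (𝕜 := ℂ)
  let K : Submodule ℂ (EuclideanSpace ℂ (Fin D)) := LinearMap.range (e O).toLinearMap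
  have hK : IsStarProjection K.starProjection := isStarProjection_starProjection
  obtain ⟨P, hP⟩ := EquivLike.surjective e K.starProjection
  -- The columns of `X` are preimages under `O` of the projected basis vectors.
  have hcol : ∀ j, ∃ y, e O y = K.starProjection (EuclideanSpace.single j 1) := fun j =>
    K.starProjection_apply_mem _
  choose y hy using hcol
  refine ⟨P, Matrix.of fun i j => y j i, ?_, ?_, ?_, ?_⟩
  · apply EquivLike.injective e
    rw [← Matrix.star_eq_conjTranspose, map_star e P, hP]
    exact hK.isSelfAdjoint
  · apply EquivLike.injective e
    rw [map_mul e P P, hP]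
    exact hK.isIdempotentElem
  · apply EquivLike.injective e
    rw [map_mul e P O, hP]
    ext1 v
    exact Submodule.starProjection_eq_self_iff.2 ⟨v, rfl⟩
  · ext i j
    have h := congrArg (fun v => v i) (hy j)
    rw [← hP] at h
    simpa [e, Matrix.ofLp_toEuclideanCLM, Matrix.mulVec, dotProduct, Matrix.mul_apply] using h.symm

/-- the purity condition holds iff every nonzero operator `O` such that
`O† A_{x_1}† ⋯ A_{x_N}† A_{x_N} ⋯ A_{x_1} O ∝ O†O` for all words has rank one. -/
theorem purityCondition_iff_operator_version {D d : ℕ}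
    (A : Fin d → Matrix (Fin D) (Fin D) ℂ) :
    PurityCondition A ↔
      ∀ O : Matrix (Fin D) (Fin D) ℂ, O ≠ 0 →
        (∀ N : ℕ, 0 < N → ∀ x : Fin N → Fin d,
          ∃ c : ℂ, Oᴴ * ((wordProd A x)ᴴ * wordProd A x) * O = c • (Oᴴ * O)) →
        O.rank = 1 := by
  constructor
  · intro hA O hO h
    obtain ⟨P, X, hH, hI, hPO, hX⟩ := exists_range_projection O
    have hP0 : P ≠ 0 := by
      rintro rfl
      exact hO (by simpa using hPO.symm)
    have hrank : P.rank = O.rank := by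
      apply le_antisymm
      · rw [hX]
        exact Matrix.rank_mul_le_left O X
      · conv_lhs => rw [← hPO]
        exact Matrix.rank_mul_le_left P O
    rw [← hrank]
    refine hA P hH hI hP0 fun N hN x => ?_
    obtain ⟨c, hc⟩ := h N hN x
    refine ⟨c, ?_⟩
    -- Conjugating by `X` turns the relation for `O` into one for `P = O * X`.
    calc P * ((wordProd A x)ᴴ * wordProd A x) * P
        = Pᴴ * ((wordProd A x)ᴴ * wordProd A x) * P := by rw [hH.eq]
      _ = Xᴴ * (Oᴴ * ((wordProd A x)ᴴ * wordProd A x) * O) * X := by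
          rw [hX, Matrix.conjTranspose_mul]
          simp only [Matrix.mul_assoc]
      _ = c • (Pᴴ * P) := by
          rw [hc, hX, Matrix.conjTranspose_mul]
          simp only [Matrix.mul_assoc, Matrix.mul_smul, Matrix.smul_mul]
      _ = c • P := by rw [hH.eq, hI]
  · intro h P hH hI hP0 hP
    refine h P hP0 fun N hN x => ?_
    simpa only [hH.eq, hI] using hP N hN x

end
end

section
/- Let {A_x}_{x=0}^{d−1} be linear operators on a finite-dimensional complex Hilbert space H with Σ_x A_x† A_x = 1. If there exists an integer N ≥ 1 such that the operators { A_{x_1}† ⋯ A_{x_N}† A_{x_N} ⋯ A_{x_1} : (x_1,…,x_N) ∈ {0,…,d−1}^N } span the full space L(H) of linear operators on H (over ℂ), then {A_x}_{x=0}^{d−1} satisfies the purity condition. -/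
/-!
The set of `M` with `P * M * P ∈ ℂ ∙ P` is a linear subspace, so if it contains a spanning family
it is everything. Taking for `M` the matrix unit at `(j, i)`, with `P i j ≠ 0`, the product
`P * M * P` is the outer product of column `j` and row `i` of `P`; it is nonzero, so `P` is
proportional to an outer product and has rank one.
-/

open scoped BigOperators ComplexOrder
open Matrix

noncomputable section
attribute [local instance] Classical.propDecidable

/-- A nonzero matrix `P` for which every `P * M * P` is a multiple of `P` has rank one. -/
theorem rank_eq_one_of_sandwich {D : ℕ} (P : Matrix (Fin D) (Fin D) ℂ) (hP : P ≠ 0)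
    (h : ∀ M : Matrix (Fin D) (Fin D) ℂ, ∃ c : ℂ, P * M * P = c • P) : P.rank = 1 := by
  obtain ⟨i, j, hij⟩ : ∃ i j, P i j ≠ 0 := by
    by_contra! hz
    exact hP (by ext i j; exact hz i j)
  obtain ⟨c, hc⟩ := h (vecMulVec (Pi.single j 1) (Pi.single i 1))
  have hprod : P * vecMulVec (Pi.single j 1) (Pi.single i 1) * P
      = vecMulVec (P.col j) (P.row i) := by
    rw [mul_vecMulVec, vecMulVec_mul, mulVec_single_one, single_one_vecMul]
  rw [hprod] at hc
  have hc0 : c ≠ 0 := by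
    rintro rfl
    have := congrFun (congrFun hc i) j
    simp [vecMulVec_apply, hij] at this
  have hPeq : P = vecMulVec (c⁻¹ • P.col j) (P.row i) := by
    rw [smul_vecMulVec, hc, smul_smul, inv_mul_cancel₀ hc0, one_smul]
  refine le_antisymm (hPeq ▸ rank_vecMulVec_le _ _) (Nat.one_le_iff_ne_zero.mpr ?_)
  intro h0
  rw [Matrix.rank, Submodule.finrank_eq_zero, LinearMap.range_eq_bot] at h0
  exact hP (Matrix.toLin'.injective (by rw [map_zero]; exact h0))

/-- if for some `N ≥ 1` the operators
`A_{x_1}† ⋯ A_{x_N}† A_{x_N} ⋯ A_{x_1}` span all of `L(H)` over `ℂ`, then the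
purity condition holds. -/
theorem purityCondition_of_span {D d : ℕ}
    (A : Fin d → Matrix (Fin D) (Fin D) ℂ)
    (hnorm : ∑ x, (A x)ᴴ * A x = 1)
    (hspan : ∃ N : ℕ, 1 ≤ N ∧
      Submodule.span ℂ
        (Set.range fun x : Fin N → Fin d => (wordProd A x)ᴴ * wordProd A x) = ⊤) :
    PurityCondition A := by
  obtain ⟨N, hN, hs⟩ := hspan
  intro P _ _ hP hw
  refine rank_eq_one_of_sandwich P hP fun M => ?_
  have hM : M ∈ Submodule.span ℂ
      (Set.range fun x : Fin N → Fin d => (wordProd A x)ᴴ * wordProd A x) := hs ▸ trivial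
  induction hM using Submodule.span_induction with
  | mem M h =>
    obtain ⟨x, rfl⟩ := h
    exact hw N hN x
  | zero => exact ⟨0, by simp⟩
  | add M M' _ _ h h' =>
    obtain ⟨a, ha⟩ := h
    obtain ⟨b, hb⟩ := h'
    exact ⟨a + b, by rw [mul_add, add_mul, ha, hb, add_smul]⟩
  | smul t M _ h =>
    obtain ⟨a, ha⟩ := h
    exact ⟨t * a, by rw [Matrix.mul_smul, Matrix.smul_mul, ha, smul_smul]⟩

end
end

section
/- For every odd integer D ≥ 3 there exists a Hermitian operator R on ℂ^D with 0 ≤ R ≤ 1 (i.e., R and 1−R are positive semidefinite) such that Tr(U_{jk}† R) ≠ 0 for all j, k ∈ {0,…,D−1}, where U_{jk} are the clock and shift unitaries on ℂ^D. -/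
/-!
Take `R` to be the orthogonal projection onto the line spanned by `v = (1, 2, 4, …, 2^(D-1))`.
Up to a positive factor, `Tr(U_{jk}† R)` equals `∑ n, conj(ω^(nk)) * 2^(n + (n + j) % D)`. The
exponent `n + (n + j) % D` is congruent to `2n + j` modulo `D`, so for odd `D` the exponents are
pairwise distinct. A sum of distinct powers of `2` with unimodular coefficients cannot vanish, as
its largest term exceeds the sum of the moduli of all the others
(`sum_unimodular_two_pow_ne_zero`).
-/

open scoped BigOperators ComplexOrder
open Matrix

noncomputable section

/-- The primitive `D`-th root of unity `ω = e^{2πi/D}`. -/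
def omegaD (D : ℕ) : ℂ := Complex.exp (2 * Real.pi * Complex.I / D)

/-- The shift operator `Λ₁ = Σ_n |(n+1) mod D⟩⟨n|`. -/
def shiftM (D : ℕ) : Matrix (Fin D) (Fin D) ℂ :=
  Matrix.of fun i j => if (i : ℕ) = ((j : ℕ) + 1) % D then 1 else 0

/-- The clock operator `Λ₃ = Σ_n ω^n |n⟩⟨n|`. -/
def clockM (D : ℕ) : Matrix (Fin D) (Fin D) ℂ :=
  Matrix.of fun i j => if i = j then omegaD D ^ (i : ℕ) else 0

/-- The clock-and-shift unitaries `U_{jk} = Λ₁^j Λ₃^k`. -/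
def Ujk (D : ℕ) (j k : ℕ) : Matrix (Fin D) (Fin D) ℂ := shiftM D ^ j * clockM D ^ k

lemma shiftM_pow_apply (D j : ℕ) (i l : Fin D) :
    (shiftM D ^ j) i l = if (i : ℕ) = ((l : ℕ) + j) % D then 1 else 0 := by
  induction j generalizing i with
  | zero => simp [Matrix.one_apply, Fin.ext_iff, Nat.mod_eq_of_lt l.isLt]
  | succ j ih =>
    have hD : 0 < D := i.pos
    rw [pow_succ', Matrix.mul_apply, Finset.sum_eq_single ⟨((l : ℕ) + j) % D, Nat.mod_lt _ hD⟩]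
    · rw [ih]
      simp [shiftM, Nat.mod_add_mod, add_assoc]
    · intro m _ hm
      rw [ih, if_neg fun h => hm (Fin.ext h), mul_zero]
    · simp

lemma clockM_pow (D k : ℕ) :
    clockM D ^ k = Matrix.diagonal fun i : Fin D => (omegaD D ^ (i : ℕ)) ^ k := by
  have h : clockM D = Matrix.diagonal fun i : Fin D => omegaD D ^ (i : ℕ) := by
    ext i j
    simp [clockM, Matrix.diagonal_apply]
  rw [h, Matrix.diagonal_pow]
  rfl

lemma Ujk_apply (D j k : ℕ) (i l : Fin D) :
    Ujk D j k i l =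
      if (i : ℕ) = ((l : ℕ) + j) % D then (omegaD D ^ (l : ℕ)) ^ k else 0 := by
  rw [Ujk, clockM_pow, Matrix.mul_diagonal, shiftM_pow_apply]
  simp

lemma norm_omegaD (D : ℕ) : ‖omegaD D‖ = 1 := by
  have h : (2 * Real.pi * Complex.I / D : ℂ) = ((2 * Real.pi / D : ℝ) : ℂ) * Complex.I := by
    push_cast
    ring
  rw [omegaD, h, Complex.norm_exp_ofReal_mul_I]

lemma sum_unimodular_two_pow_ne_zero {ι : Type*} [Fintype ι] [Nonempty ι] (e : ι → ℕ)
    (he : Function.Injective e) (c : ι → ℂ) (hc : ∀ i, ‖c i‖ = 1) :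
    ∑ i, c i * 2 ^ e i ≠ 0 := by
  classical
  intro h
  obtain ⟨m, -, hm⟩ := Finset.exists_max_image Finset.univ e Finset.univ_nonempty
  rw [← Finset.add_sum_erase _ _ (Finset.mem_univ m)] at h
  have h1 : ‖c m * 2 ^ e m‖ ≤ ∑ i ∈ Finset.univ.erase m, (2 : ℝ) ^ e i := by
    rw [eq_neg_of_add_eq_zero_left h, norm_neg]
    refine (norm_sum_le _ _).trans_eq (Finset.sum_congr rfl fun i _ => ?_)
    simp [hc]
  have h2 : ∑ i ∈ Finset.univ.erase m, 2 ^ e i < 2 ^ e m := by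
    rw [← Finset.sum_image (f := fun k => 2 ^ k) (g := e) he.injOn]
    refine Nat.geomSum_lt le_rfl fun k hk => ?_
    obtain ⟨i, hi, rfl⟩ := Finset.mem_image.1 hk
    exact lt_of_le_of_ne (hm i (Finset.mem_univ i)) (he.ne (Finset.ne_of_mem_erase hi))
  have h3 : ∑ i ∈ Finset.univ.erase m, (2 : ℝ) ^ e i < 2 ^ e m := by exact_mod_cast h2
  simp only [norm_mul, hc, norm_pow, Complex.norm_ofNat, one_mul] at h1
  linarith

lemma exponent_injective {D : ℕ} (hodd : Odd D) (j : ℕ) :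
    Function.Injective fun n : Fin D => (n : ℕ) + ((n : ℕ) + j) % D := by
  intro a b hab
  have hmod : ∀ n : ℕ, n + (n + j) % D ≡ 2 * n + j [MOD D] := fun n => by
    have := (Nat.mod_modEq (n + j) D).add_left n
    rwa [← add_assoc, ← two_mul] at this
  have h : 2 * (a : ℕ) + j ≡ 2 * (b : ℕ) + j [MOD D] :=
    (hmod a).symm.trans ((congrArg (· % D) hab).trans (hmod b))
  have h' : (a : ℕ) ≡ b [MOD D] :=
    Nat.ModEq.cancel_left_of_coprime (Nat.coprime_two_right.2 hodd) (h.add_right_cancel' j)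
  exact Fin.ext (h'.eq_of_lt_of_lt a.isLt b.isLt)

/-- The vector `(1, 2, 4, …, 2^(D-1))`, not normalized. -/
def powVec (D : ℕ) : Fin D → ℂ := fun n => 2 ^ (n : ℕ)

/-- The orthogonal projection onto the line spanned by `powVec D`. -/
def powProj (D : ℕ) : Matrix (Fin D) (Fin D) ℂ :=
  (powVec D ⬝ᵥ powVec D)⁻¹ • vecMulVec (powVec D) (powVec D)

lemma powVec_dotProduct_ne_zero {D : ℕ} (hD : 0 < D) : powVec D ⬝ᵥ powVec D ≠ 0 := by
  have h : powVec D ⬝ᵥ powVec D = ((∑ n : Fin D, 2 ^ (n : ℕ) * 2 ^ (n : ℕ) : ℕ) : ℂ) := by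
    simp [powVec, dotProduct]
  have : Nonempty (Fin D) := ⟨⟨0, hD⟩⟩
  rw [h, Nat.cast_ne_zero]
  exact (Finset.sum_pos (fun _ _ => by positivity) Finset.univ_nonempty).ne'

lemma powProj_conjTranspose (D : ℕ) : (powProj D)ᴴ = powProj D := by
  ext i j
  simp [powProj, powVec, vecMulVec_apply, dotProduct, mul_comm]

lemma powProj_mul_self {D : ℕ} (hD : 0 < D) : powProj D * powProj D = powProj D := by
  rw [powProj, smul_mul_smul_comm, vecMulVec_mul_vecMulVec, vecMulVec_smul, smul_smul,
    inv_mul_cancel_right₀ (powVec_dotProduct_ne_zero hD)]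

lemma trace_Ujk_powProj {D : ℕ} (hD : 0 < D) (j k : ℕ) :
    ((Ujk D j k)ᴴ * powProj D).trace = (powVec D ⬝ᵥ powVec D)⁻¹ *
      ∑ n : Fin D, star ((omegaD D ^ (n : ℕ)) ^ k) * 2 ^ ((n : ℕ) + ((n : ℕ) + j) % D) := by
  rw [Matrix.trace, Finset.mul_sum]
  refine Finset.sum_congr rfl fun n _ => ?_
  rw [Matrix.diag_apply, Matrix.mul_apply,
    Finset.sum_eq_single ⟨((n : ℕ) + j) % D, Nat.mod_lt _ hD⟩]
  · rw [conjTranspose_apply, Ujk_apply, if_pos rfl, powProj, Matrix.smul_apply, vecMulVec_apply,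
      smul_eq_mul]
    simp only [powVec, pow_add]
    ring
  · intro m _ hm
    rw [conjTranspose_apply, Ujk_apply, if_neg fun h => hm (Fin.ext h), star_zero, zero_mul]
  · simp

/-- for every odd `D ≥ 3` there is an operator `R` with `0 ≤ R ≤ 1`
whose overlaps `Tr(U_{jk}† R)` with all clock-and-shift unitaries are nonzero. -/
theorem exists_contraction_with_all_overlaps_nonzero (D : ℕ) (hD : 3 ≤ D) (hodd : Odd D) :
    ∃ R : Matrix (Fin D) (Fin D) ℂ, R.PosSemidef ∧ (1 - R).PosSemidef ∧
      ∀ j k : ℕ, j < D → k < D → ((Ujk D j k)ᴴ * R).trace ≠ 0 := by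
  have hD0 : 0 < D := by omega
  have : Nonempty (Fin D) := ⟨⟨0, hD0⟩⟩
  refine ⟨powProj D, ?_, ?_, fun j k _ _ => ?_⟩
  · have h := posSemidef_conjTranspose_mul_self (powProj D)
    rwa [powProj_conjTranspose, powProj_mul_self hD0] at h
  · -- The complement of a projection is again a projection.
    have h := posSemidef_conjTranspose_mul_self (1 - powProj D)
    rwa [conjTranspose_sub, conjTranspose_one, powProj_conjTranspose, sub_mul, one_mul, mul_sub,
      mul_one, powProj_mul_self hD0, sub_self, sub_zero] at h
  · rw [trace_Ujk_powProj hD0]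
    refine mul_ne_zero (inv_ne_zero (powVec_dotProduct_ne_zero hD0))
      (sum_unimodular_two_pow_ne_zero _ (exponent_injective hodd j) _ fun n => ?_)
    rw [norm_star, norm_pow, norm_pow, norm_omegaD, one_pow, one_pow]

end
end

section
/- Let {ρ_x}_{x=0}^{M−1} be density matrices on a complex Hilbert space H of finite dimension D ≥ 2, and let {p(x)}_{x=0}^{M−1} be nonnegative reals with Σ_x p(x) = 1. Set Q := 1 − Σ_x p(x) ‖ρ_x‖, where ‖ρ_x‖ is the operator norm (the largest eigenvalue) of ρ_x. Then Σ_x p(x) S(ρ_x) ≤ −Q log Q + Q·(log(D−1) + 1), where −Q log Q := 0 when Q = 0. -/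
/-!
For a density matrix with spectrum `λ`, single out one eigenvalue `λ j = 1 - q`. It contributes
`-(1 - q) log (1 - q) ≤ q` to the entropy, and by concavity of `-t log t` the other `D - 1`
eigenvalues, of total mass `q`, contribute at most `-q log q + q log (D - 1)`, the value for a
uniform distribution of that mass. So `S ≤ f q` with `f q = -q log q + q (log (D - 1) + 1)`.
As `f` is concave, Jensen's inequality bounds the average of `f (q x)` by `f` of the averaged
`q x`, which is `Q`. Only that `‖ρ‖` is an eigenvalue matters, not that it is the largest.
-/

open scoped BigOperators ComplexOrder
open Matrix

noncomputable section
attribute [local instance] Classical.propDecidable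

/-- The `k`-th largest eigenvalue (`k` counted from `0`) of a Hermitian matrix;
junk value `0` if the matrix is not Hermitian or `k` is out of range.
For a density matrix, `eigD ρ 0` is its operator norm. -/
def eigD {D : ℕ} (M : Matrix (Fin D) (Fin D) ℂ) (k : ℕ) : ℝ :=
  if h : M.IsHermitian then
    (((List.ofFn h.eigenvalues).insertionSort (· ≤ ·)).reverse).getD k 0
  else 0

/-- Von Neumann entropy (natural logarithm, convention `0 log 0 = 0`). -/
def vnEntropy {D : ℕ} (M : Matrix (Fin D) (Fin D) ℂ) : ℝ :=
  if h : M.IsHermitian then -∑ i, h.eigenvalues i * Real.log (h.eigenvalues i)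
  else 0

/-- Among families of given total mass on `n` points, `-t log t` sums to at most its value on
the uniform family. -/
lemma sum_negMulLog_le {ι : Type*} (s : Finset ι) (hs : s.Nonempty) (a : ι → ℝ)
    (ha : ∀ i ∈ s, 0 ≤ a i) :
    ∑ i ∈ s, Real.negMulLog (a i) ≤
      Real.negMulLog (∑ i ∈ s, a i) + (∑ i ∈ s, a i) * Real.log s.card := by
  have hn : (0 : ℝ) < s.card := by exact_mod_cast hs.card_pos
  have h := Real.concaveOn_negMulLog.le_map_sum (t := s) (w := fun _ => (s.card : ℝ)⁻¹) (p := a)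
    (fun _ _ => by positivity) (by simp [hn.ne']) (fun i hi => ha i hi)
  simp only [smul_eq_mul, ← Finset.mul_sum] at h
  rw [Real.negMulLog_mul] at h
  have h2 := mul_le_mul_of_nonneg_left h hn.le
  rw [← mul_assoc, mul_inv_cancel₀ hn.ne', one_mul] at h2
  refine h2.trans (le_of_eq ?_)
  simp only [Real.negMulLog, Real.log_inv]
  field_simp
  ring

/-- The concave function of the defect `q` bounding the entropy of a single state. -/
def entropyBound (D : ℕ) (q : ℝ) : ℝ :=
  Real.negMulLog q + q * (Real.log ((D : ℝ) - 1) + 1)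

lemma concaveOn_entropyBound (D : ℕ) : ConcaveOn ℝ (Set.Ici 0) (entropyBound D) := by
  refine Real.concaveOn_negMulLog.add ⟨convex_Ici 0, fun x _ y _ a b _ _ _ => le_of_eq ?_⟩
  simp only [smul_eq_mul]
  ring

lemma sum_negMulLog_le_entropyBound {D : ℕ} (hD : 2 ≤ D) (a : Fin D → ℝ) (ha : ∀ i, 0 ≤ a i)
    (hsum : ∑ i, a i = 1) (j : Fin D) :
    ∑ i, Real.negMulLog (a i) ≤ entropyBound D (1 - a j) := by
  have hcard : (Finset.univ.erase j).card = D - 1 := by simp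
  have hrest : ∑ i ∈ Finset.univ.erase j, a i = 1 - a j := by
    rw [← hsum, ← Finset.add_sum_erase _ a (Finset.mem_univ j)]
    ring
  have h := sum_negMulLog_le (Finset.univ.erase j) (Finset.card_pos.mp (by omega)) a
    fun i _ => ha i
  rw [hrest, hcard, Nat.cast_sub (by omega), Nat.cast_one] at h
  have h1 : Real.negMulLog (a j) ≤ 1 - a j := by
    rcases (ha j).eq_or_lt with h0 | h0
    · simp [← h0]
    · have h2 := mul_le_mul_of_nonneg_left (Real.one_sub_inv_le_log_of_pos h0) h0.le
      rw [mul_sub, mul_inv_cancel₀ h0.ne'] at h2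
      rw [Real.negMulLog]
      linarith
  rw [← Finset.add_sum_erase _ _ (Finset.mem_univ j), entropyBound]
  linarith

lemma exists_eigD_zero_eq {D : ℕ} (hD : 0 < D) {A : Matrix (Fin D) (Fin D) ℂ}
    (hA : A.IsHermitian) : ∃ j, eigD A 0 = hA.eigenvalues j := by
  rw [eigD, dif_pos hA]
  set l := ((List.ofFn hA.eigenvalues).insertionSort (· ≤ ·)).reverse with hl
  have hlen : 0 < l.length := by simpa [hl] using hD
  have hmem : l.getD 0 0 ∈ l := by
    rw [List.getD_eq_getElem _ _ hlen]
    exact List.getElem_mem hlen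
  have hmem' : l.getD 0 0 ∈ List.ofFn hA.eigenvalues := by
    rwa [hl, List.mem_reverse, List.mem_insertionSort, ← hl] at hmem
  obtain ⟨j, hj⟩ := List.mem_ofFn.mp hmem'
  exact ⟨j, hj.symm⟩

/-- The single-state case; the defect is nonnegative, so Jensen applies to it. -/
lemma vnEntropy_le {D : ℕ} (hD : 2 ≤ D) {A : Matrix (Fin D) (Fin D) ℂ} (hA : A.PosSemidef)
    (htr : A.trace = 1) :
    0 ≤ 1 - eigD A 0 ∧ vnEntropy A ≤ entropyBound D (1 - eigD A 0) := by
  obtain ⟨j, hj⟩ := exists_eigD_zero_eq (by omega) hA.isHermitian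
  have hsum : ∑ i, hA.isHermitian.eigenvalues i = 1 := by
    have h := hA.isHermitian.trace_eq_sum_eigenvalues
    rw [htr] at h
    simpa using (congrArg Complex.re h).symm
  have hnn := hA.eigenvalues_nonneg
  rw [hj]
  constructor
  · have h := Finset.single_le_sum (fun i _ => hnn i) (Finset.mem_univ j)
    linarith
  · refine le_of_eq_of_le ?_ (sum_negMulLog_le_entropyBound hD _ hnn hsum j)
    rw [vnEntropy, dif_pos hA.isHermitian, ← Finset.sum_neg_distrib]
    simp only [Real.negMulLog, neg_mul]

/-- for density matrices `ρ_x` on a `D`-dimensional space (`D ≥ 2`) and a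
probability distribution `p`, setting `Q := 1 − Σ_x p(x) ‖ρ_x‖` (operator norm = largest
eigenvalue), the average entropy satisfies
`Σ_x p(x) S(ρ_x) ≤ −Q log Q + Q (log (D−1) + 1)`
(with `−Q log Q = 0` when `Q = 0`, automatic since `Real.log 0 = 0`). -/
theorem average_entropy_le {D M : ℕ} (hD : 2 ≤ D)
    (ρ : Fin M → Matrix (Fin D) (Fin D) ℂ)
    (hρ : ∀ x, (ρ x).PosSemidef) (htr : ∀ x, (ρ x).trace = 1)
    (p : Fin M → ℝ) (hp : ∀ x, 0 ≤ p x) (hsum : ∑ x, p x = 1) :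
    ∑ x, p x * vnEntropy (ρ x) ≤
      -((1 - ∑ x, p x * eigD (ρ x) 0) * Real.log (1 - ∑ x, p x * eigD (ρ x) 0))
        + (1 - ∑ x, p x * eigD (ρ x) 0) * (Real.log ((D : ℝ) - 1) + 1) := by
  have hQ : ∑ x, p x * (1 - eigD (ρ x) 0) = 1 - ∑ x, p x * eigD (ρ x) 0 := by
    simp only [mul_sub, mul_one, Finset.sum_sub_distrib, hsum]
  have hJ := (concaveOn_entropyBound D).le_map_sum (t := Finset.univ) (w := p)
    (p := fun x => 1 - eigD (ρ x) 0) (fun x _ => hp x) hsum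
    (fun x _ => (vnEntropy_le hD (hρ x) (htr x)).1)
  simp only [smul_eq_mul] at hJ
  rw [hQ] at hJ
  calc ∑ x, p x * vnEntropy (ρ x)
      ≤ ∑ x, p x * entropyBound D (1 - eigD (ρ x) 0) :=
        Finset.sum_le_sum fun x _ =>
          mul_le_mul_of_nonneg_left (vnEntropy_le hD (hρ x) (htr x)).2 (hp x)
    _ ≤ entropyBound D (1 - ∑ x, p x * eigD (ρ x) 0) := hJ
    _ = _ := by simp only [entropyBound, Real.negMulLog, neg_mul]

end
end

section
/- Let {A_x}_{x=0}^{d−1} be D×D complex matrices with Σ_x A_x† A_x = 1, and suppose the transfer channel E(χ) := Σ_x A_x χ A_x† is primitive. Then there exist a real number r > 0 and a natural number N₀ such that for all nonnegative integers a, b, all N ≥ N₀, and all unit vectors L, R ∈ ℂ^D, one has ⟨R| E^{a+N+b}(|L⟩⟨L|) |R⟩ ≥ r; the constants r and N₀ are independent of a, b, L and R. -/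
/-!
As `n` grows, `E^n(|L⟩⟨L|)` approaches `ρ`, and `⟨R|ρ|R⟩` is bounded below by a positive constant
`c` on the compact unit sphere because `ρ` is positive definite (`exists_posDef_lower_bound`).
The convergence is uniform in `L`, since the linear map `χ ↦ E^n(χ) - Tr(χ) ρ` is controlled by
its finitely many matrix entries on the matrix units: if these are all at most `δ`, then on unit
vectors the overlap differs from `⟨R|ρ|R⟩` by at most `D⁴ δ` (`norm_overlap_le`). Choosing `δ` with
`D⁴ δ ≤ c / 2` gives the bound `r = c / 2` for every exponent `n ≥ N₀`, in particular for
`a + N + b`.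
-/


open scoped BigOperators ComplexOrder
open Matrix

noncomputable section
attribute [local instance] Classical.propDecidable

/-- The transfer channel `E(χ) = Σ_x A_x χ A_x†`. -/
def transfer {D d : ℕ} (A : Fin d → Matrix (Fin D) (Fin D) ℂ)
    (χ : Matrix (Fin D) (Fin D) ℂ) : Matrix (Fin D) (Fin D) ℂ :=
  ∑ x, A x * χ * (A x)ᴴ

/-- Primitivity of the transfer channel: it has a positive definite fixed density matrix `ρ`
and `E^N(χ) → ρ · Tr χ` as `N → ∞`, for every matrix `χ`. -/
def Primitive {D d : ℕ} (A : Fin d → Matrix (Fin D) (Fin D) ℂ) : Prop :=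
  ∃ ρ : Matrix (Fin D) (Fin D) ℂ, ρ.PosDef ∧ ρ.trace = 1 ∧ transfer A ρ = ρ ∧
    ∀ χ : Matrix (Fin D) (Fin D) ℂ,
      Filter.Tendsto (fun N => (transfer A)^[N] χ) Filter.atTop (nhds (χ.trace • ρ))

/-- The transfer channel as a `ℂ`-linear map. -/
def transferLin {D d : ℕ} (A : Fin d → Matrix (Fin D) (Fin D) ℂ) :
    Matrix (Fin D) (Fin D) ℂ →ₗ[ℂ] Matrix (Fin D) (Fin D) ℂ where
  toFun := transfer A
  map_add' X Y := by simp [transfer, Matrix.mul_add, Matrix.add_mul, Finset.sum_add_distrib]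
  map_smul' c X := by simp [transfer, Finset.smul_sum]

lemma transferLin_pow_apply {D d : ℕ} (A : Fin d → Matrix (Fin D) (Fin D) ℂ) (n : ℕ)
    (χ : Matrix (Fin D) (Fin D) ℂ) : (transferLin A ^ n) χ = (transfer A)^[n] χ := by
  rw [Module.End.pow_apply]
  rfl

lemma trace_vecMulVec_star {D : ℕ} {L : Fin D → ℂ} (hL : star L ⬝ᵥ L = 1) :
    (Matrix.vecMulVec L (star L)).trace = 1 := by
  rw [Matrix.trace_vecMulVec, dotProduct_comm, hL]

lemma norm_apply_le_one {D : ℕ} {L : Fin D → ℂ} (hL : star L ⬝ᵥ L = 1) (i : Fin D) :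
    ‖L i‖ ≤ 1 := by
  have h : ∑ j, ‖L j‖ ^ 2 = 1 := by
    have h2 : ((∑ j, ‖L j‖ ^ 2 : ℝ) : ℂ) = 1 := by
      rw [← hL]
      simp [dotProduct, Complex.conj_mul']
    exact_mod_cast h2
  have h3 : ‖L i‖ ^ 2 ≤ 1 := h ▸
    Finset.single_le_sum (f := fun j => ‖L j‖ ^ 2) (fun j _ => sq_nonneg _) (Finset.mem_univ i)
  exact (sq_le_one_iff₀ (norm_nonneg _)).1 h3

/-- A linear map on matrices whose entries on the matrix units are at most `δ` has overlaps
`⟨R| G(|L⟩⟨L|) |R⟩` at most `D⁴ δ`, uniformly over unit vectors. -/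
lemma norm_overlap_le {D : ℕ} (G : Matrix (Fin D) (Fin D) ℂ →ₗ[ℂ] Matrix (Fin D) (Fin D) ℂ)
    {δ : ℝ} (hG : ∀ i j k l, ‖G (Matrix.single i j 1) k l‖ ≤ δ) {L R : Fin D → ℂ}
    (hL : star L ⬝ᵥ L = 1) (hR : star R ⬝ᵥ R = 1) :
    ‖star R ⬝ᵥ (G (Matrix.vecMulVec L (star L))).mulVec R‖ ≤ (D : ℝ) ^ 4 * δ := by
  have hentry : ∀ k l, ‖G (Matrix.vecMulVec L (star L)) k l‖ ≤ (D : ℝ) ^ 2 * δ := by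
    intro k l
    have hsum : G (Matrix.vecMulVec L (star L)) k l
        = ∑ i, ∑ j, L i * star (L j) * G (Matrix.single i j 1) k l := by
      have h1 : Matrix.vecMulVec L (star L)
          = ∑ i, ∑ j, (L i * star (L j)) • Matrix.single i j (1 : ℂ) := by
        conv_lhs => rw [Matrix.matrix_eq_sum_single (Matrix.vecMulVec L (star L))]
        simp [Matrix.vecMulVec_apply, Matrix.smul_single]
      rw [h1]
      simp only [map_sum, map_smul, Matrix.sum_apply, Matrix.smul_apply, smul_eq_mul]
    rw [hsum]
    have hterm : ∀ i j, ‖L i * star (L j) * G (Matrix.single i j 1) k l‖ ≤ δ := by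
      intro i j
      rw [norm_mul, norm_mul, norm_star]
      exact (mul_le_of_le_one_left (norm_nonneg _) (mul_le_one₀ (norm_apply_le_one hL i)
        (norm_nonneg _) (norm_apply_le_one hL j))).trans (hG i j k l)
    calc _ ≤ ∑ _i : Fin D, ∑ _j : Fin D, δ :=
          norm_sum_le_of_le _ fun i _ => norm_sum_le_of_le _ fun j _ => hterm i j
      _ = (D : ℝ) ^ 2 * δ := by simp; ring
  generalize G (Matrix.vecMulVec L (star L)) = M at hentry
  have hterm : ∀ k l, ‖star (R k) * (M k l * R l)‖ ≤ (D : ℝ) ^ 2 * δ := by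
    intro k l
    rw [norm_mul, norm_mul, norm_star]
    exact (mul_le_of_le_one_left (by positivity) (norm_apply_le_one hR k)).trans
      ((mul_le_of_le_one_right (norm_nonneg _) (norm_apply_le_one hR l)).trans (hentry k l))
  calc ‖star R ⬝ᵥ M.mulVec R‖ = ‖∑ k, ∑ l, star (R k) * (M k l * R l)‖ := by
        simp [dotProduct, Matrix.mulVec, Finset.mul_sum]
    _ ≤ ∑ _k : Fin D, ∑ _l : Fin D, (D : ℝ) ^ 2 * δ :=
        norm_sum_le_of_le _ fun k _ => norm_sum_le_of_le _ fun l _ => hterm k l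
    _ = (D : ℝ) ^ 4 * δ := by simp; ring

lemma exists_posDef_lower_bound {D : ℕ} {ρ : Matrix (Fin D) (Fin D) ℂ} (hρ : ρ.PosDef) :
    ∃ c : ℝ, 0 < c ∧ ∀ R : Fin D → ℂ, star R ⬝ᵥ R = 1 → c ≤ (star R ⬝ᵥ ρ.mulVec R).re := by
  let S : Set (Fin D → ℂ) := {R | star R ⬝ᵥ R = 1}
  have hclosed : IsClosed S :=
    isClosed_eq (continuous_star.dotProduct continuous_id) continuous_const
  -- `Fin D → ℂ` carries the sup norm, for which the Euclidean unit sphere lies in the unit ball.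
  have hsub : S ⊆ Metric.closedBall 0 1 := fun R hR => by
    rw [mem_closedBall_zero_iff]
    exact (pi_norm_le_iff_of_nonneg zero_le_one).2 (norm_apply_le_one hR)
  have hcomp : IsCompact S := (isCompact_closedBall _ _).of_isClosed_subset hclosed hsub
  have hcont : Continuous fun R : Fin D → ℂ => (star R ⬝ᵥ ρ.mulVec R).re :=
    Complex.continuous_re.comp
      (continuous_star.dotProduct (continuous_const.matrix_mulVec continuous_id))
  rcases S.eq_empty_or_nonempty with hS | hS
  · exact ⟨1, one_pos, fun R hR => absurd (show R ∈ S from hR) (by simp [hS])⟩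
  · obtain ⟨R₀, hR₀, hmin⟩ := hcomp.exists_isMinOn hS hcont.continuousOn
    refine ⟨_, ?_, fun R hR => hmin hR⟩
    have hne : R₀ ≠ 0 := by
      rintro rfl
      simp [S] at hR₀
    exact (Complex.lt_def.1 (hρ.dotProduct_mulVec_pos hne)).1

/-- if the transfer channel of `{A_x}` is primitive, there are `r > 0` and
`N₀` (independent of `a`, `b`, `L`, `R`) with
`⟨R| E^{a+N+b}(|L⟩⟨L|) |R⟩ ≥ r` for all `a`, `b`, all `N ≥ N₀`, and all unit vectors
`L`, `R`. -/
theorem transfer_boundary_overlap_lower_bound {D d : ℕ}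
    (A : Fin d → Matrix (Fin D) (Fin D) ℂ)
    (hnorm : ∑ x, (A x)ᴴ * A x = 1)
    (hprim : Primitive A) :
    ∃ r : ℝ, 0 < r ∧ ∃ N₀ : ℕ, ∀ a b N : ℕ, N₀ ≤ N → ∀ L R : Fin D → ℂ,
      star L ⬝ᵥ L = 1 → star R ⬝ᵥ R = 1 →
      r ≤ (star R ⬝ᵥ
            ((transfer A)^[a + N + b] (Matrix.vecMulVec L (star L))).mulVec R).re := by
  obtain ⟨ρ, hρ, -, -, hlim⟩ := hprim
  obtain ⟨c, hc, hcR⟩ := exists_posDef_lower_bound hρ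
  -- The summand `1` keeps the denominator positive when `D = 0`.
  set δ : ℝ := c / (2 * ((D : ℝ) ^ 4 + 1)) with hδ
  have hδ0 : 0 < δ := by positivity
  have hδc : (D : ℝ) ^ 4 * δ ≤ c / 2 := by
    have h : ((D : ℝ) ^ 4 + 1) * δ = c / 2 := by
      rw [hδ]
      field_simp
    linarith
  let G : ℕ → Matrix (Fin D) (Fin D) ℂ →ₗ[ℂ] Matrix (Fin D) (Fin D) ℂ := fun n =>
    transferLin A ^ n - (Matrix.traceLinearMap (Fin D) ℂ ℂ).smulRight ρ
  have hGapp : ∀ n χ, G n χ = (transfer A)^[n] χ - χ.trace • ρ := fun n χ => by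
    simp [G, transferLin_pow_apply]
  have hev : ∀ᶠ n in Filter.atTop, ∀ i j k l, ‖G n (Matrix.single i j 1) k l‖ ≤ δ := by
    simp only [Filter.eventually_all]
    intro i j k l
    have h1 := tendsto_pi_nhds.1 (tendsto_pi_nhds.1 (hlim (Matrix.single i j 1)) k) l
    filter_upwards [Metric.tendsto_nhds.1 h1 δ hδ0] with n hn
    rw [dist_eq_norm] at hn
    rw [hGapp]
    exact hn.le
  obtain ⟨N₀, hN₀⟩ := Filter.eventually_atTop.1 hev
  refine ⟨c / 2, half_pos hc, N₀, fun a b N hN L R hL hR => ?_⟩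
  have hb := norm_overlap_le (G (a + N + b)) (hN₀ _ (by omega)) hL hR
  rw [hGapp, trace_vecMulVec_star hL, one_smul, Matrix.sub_mulVec, dotProduct_sub] at hb
  have hre := (abs_le.1 ((Complex.abs_re_le_norm _).trans hb)).1
  rw [Complex.sub_re] at hre
  linarith [hcR R hR]

end
end

section
/- For the binary entropy H_B(λ) := −λ log λ − (1−λ) log(1−λ) (natural logarithm, with H_B(0) := 0 and H_B(1) := 0), one has H_B(λ) ≥ 4 log(2) · λ(1−λ) for all 0 ≤ λ ≤ 1. -/
/-!
Put `f t = H_B(t) - 4 log 2 * t * (1 - t)`. Then `f` is symmetric about `1/2`, vanishes at `0` and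
`1/2`, and `f'' t = 8 log 2 - 1 / (t * (1 - t))` has the sign of `8 log 2 * t * (1 - t) - 1`.
Hence, with `a < 1/2` the smaller root of `8 log 2 * a * (1 - a) = 1`, `f` is convex on `[a, 1 - a]`
and concave on `[0, a]`. By convexity and symmetry, `0 = f (1/2) ≤ (f t + f (1 - t)) / 2 = f t`
on `[a, 1 - a]`; in particular `f a ≥ 0 = f 0`, so concavity gives `f ≥ 0` on `[0, a]`.
Symmetry covers the rest.
-/


/-- The binary entropy function (natural logarithm).  Since `Real.log 0 = 0` in Mathlib,
this formula automatically satisfies the conventions `H_B(0) = 0` and `H_B(1) = 0`. -/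
noncomputable def binEntropy (t : ℝ) : ℝ :=
  -(t * Real.log t) - (1 - t) * Real.log (1 - t)

/-- The difference of the two sides of the inequality. -/
noncomputable def entropyGap (t : ℝ) : ℝ :=
  binEntropy t - 4 * Real.log 2 * (t * (1 - t))

lemma binEntropy_eq_real : binEntropy = Real.binEntropy := by
  ext t
  simp only [binEntropy, Real.binEntropy, Real.log_inv]
  ring

lemma entropyGap_symm (t : ℝ) : entropyGap (1 - t) = entropyGap t := by
  simp only [entropyGap, binEntropy_eq_real, Real.binEntropy_one_sub]
  ring

lemma entropyGap_zero : entropyGap 0 = 0 := by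
  simp [entropyGap, binEntropy]

lemma entropyGap_half : entropyGap 2⁻¹ = 0 := by
  simp only [entropyGap, binEntropy_eq_real, Real.binEntropy_two_inv]
  ring

lemma continuous_entropyGap : Continuous entropyGap := by
  unfold entropyGap
  rw [binEntropy_eq_real]
  fun_prop

lemma hasDerivAt_entropyGap {t : ℝ} (h0 : 0 < t) (h1 : t < 1) :
    HasDerivAt entropyGap
      (Real.log (1 - t) - Real.log t - 4 * Real.log 2 * (1 - 2 * t)) t := by
  have h := Real.hasDerivAt_binEntropy h0.ne' h1.ne
  rw [← binEntropy_eq_real] at h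
  have hp : HasDerivAt (fun x : ℝ => x * (1 - x)) (1 * (1 - t) + t * (-1)) t :=
    (hasDerivAt_id t).mul ((hasDerivAt_id t).const_sub 1)
  refine (h.sub (hp.const_mul (4 * Real.log 2))).congr_deriv ?_
  ring

lemma hasDerivAt_deriv_entropyGap {t : ℝ} (h0 : 0 < t) (h1 : t < 1) :
    HasDerivAt (fun t => Real.log (1 - t) - Real.log t - 4 * Real.log 2 * (1 - 2 * t))
      ((8 * Real.log 2 * (t * (1 - t)) - 1) / (t * (1 - t))) t := by
  have h1' : 1 - t ≠ 0 := by linarith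
  have hl : HasDerivAt (fun x : ℝ => Real.log (1 - x)) (-1 / (1 - t)) t :=
    ((hasDerivAt_id t).const_sub 1).log h1'
  have hp : HasDerivAt (fun x : ℝ => 1 - 2 * x) (-(2 * 1)) t :=
    ((hasDerivAt_id t).const_mul 2).const_sub 1
  refine ((hl.sub (Real.hasDerivAt_log h0.ne')).sub
    (hp.const_mul (4 * Real.log 2))).congr_deriv ?_
  have := h0.ne'
  field_simp
  ring

/-- The inflection point of `entropyGap` in `(0, 1/2)`; it exists because `8 * log 2 > 4`. -/
lemma exists_inflection :
    ∃ a : ℝ, 0 < a ∧ a < 2⁻¹ ∧ 8 * Real.log 2 * (a * (1 - a)) = 1 := by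
  have hl := Real.log_two_gt_d9
  have hc : ContinuousOn (fun a : ℝ => 8 * Real.log 2 * (a * (1 - a))) (Set.Icc 0 2⁻¹) := by
    fun_prop
  obtain ⟨a, ha, h⟩ := intermediate_value_Ioo (by norm_num : (0 : ℝ) ≤ 2⁻¹) hc
    (show (1 : ℝ) ∈ Set.Ioo _ _ from ⟨by norm_num, by linarith⟩)
  exact ⟨a, ha.1, ha.2, h⟩

lemma entropyGap_nonneg_of_le_half {t : ℝ} (h0 : 0 ≤ t) (h1 : t ≤ 2⁻¹) : 0 ≤ entropyGap t := by
  obtain ⟨a, ha0, ha1, ha⟩ := exists_inflection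
  have ha1' : a < 1 / 2 := by linarith
  have hl : 0 < Real.log 2 := Real.log_pos (by norm_num)
  have hconv : ConvexOn ℝ (Set.Icc a (1 - a)) entropyGap := by
    refine convexOn_of_hasDerivWithinAt2_nonneg (convex_Icc _ _)
      continuous_entropyGap.continuousOn
      (fun x hx => (hasDerivAt_entropyGap ?_ ?_).hasDerivWithinAt)
      (fun x hx => (hasDerivAt_deriv_entropyGap ?_ ?_).hasDerivWithinAt) (fun x hx => ?_)
    all_goals
      rw [interior_Icc] at hx
      obtain ⟨hx0, hx1⟩ := hx
    any_goals linarith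
    have hm : a * (1 - a) ≤ x * (1 - x) := by nlinarith
    exact div_nonneg (by nlinarith) (mul_nonneg (by linarith) (by linarith))
  have hconc : ConcaveOn ℝ (Set.Icc 0 a) entropyGap := by
    refine concaveOn_of_hasDerivWithinAt2_nonpos (convex_Icc _ _)
      continuous_entropyGap.continuousOn
      (fun x hx => (hasDerivAt_entropyGap ?_ ?_).hasDerivWithinAt)
      (fun x hx => (hasDerivAt_deriv_entropyGap ?_ ?_).hasDerivWithinAt) (fun x hx => ?_)
    all_goals
      rw [interior_Icc] at hx
      obtain ⟨hx0, hx1⟩ := hx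
    any_goals linarith
    have hm : x * (1 - x) ≤ a * (1 - a) := by nlinarith
    exact div_nonpos_of_nonpos_of_nonneg (by nlinarith)
      (mul_nonneg (by linarith) (by linarith))
  have hmid : ∀ x ∈ Set.Icc a 2⁻¹, 0 ≤ entropyGap x := by
    rintro x ⟨hx0, hx1⟩
    have hx1' : x ≤ 1 / 2 := by linarith
    have h := hconv.2 (show x ∈ Set.Icc a (1 - a) from ⟨hx0, by linarith⟩)
      (show 1 - x ∈ Set.Icc a (1 - a) from ⟨by linarith, by linarith⟩)
      (show (0 : ℝ) ≤ 2⁻¹ by norm_num) (show (0 : ℝ) ≤ 2⁻¹ by norm_num) (by norm_num)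
    have he : (2⁻¹ : ℝ) • x + (2⁻¹ : ℝ) • (1 - x) = 2⁻¹ := by
      simp only [smul_eq_mul]
      ring
    rw [he, entropyGap_half, entropyGap_symm, smul_eq_mul] at h
    linarith
  rcases le_total a t with hat | hta
  · exact hmid t ⟨hat, h1⟩
  · have h := hconc.min_le_of_mem_Icc (x := 0) (y := a) ⟨le_rfl, ha0.le⟩ ⟨ha0.le, le_rfl⟩
      (z := t) ⟨h0, hta⟩
    rwa [entropyGap_zero, min_eq_left (hmid a ⟨le_rfl, ha1.le⟩)] at h

/-- `H_B(λ) ≥ 4 log 2 · λ(1−λ)` for all `0 ≤ λ ≤ 1`. -/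
theorem binEntropy_ge (lam : ℝ) (h0 : 0 ≤ lam) (h1 : lam ≤ 1) :
    4 * Real.log 2 * (lam * (1 - lam)) ≤ binEntropy lam := by
  suffices h : 0 ≤ entropyGap lam from sub_nonneg.mp h
  rcases le_total lam 2⁻¹ with h | h
  · exact entropyGap_nonneg_of_le_half h0 h
  · rw [← entropyGap_symm]
    exact entropyGap_nonneg_of_le_half (by linarith) (by linarith)
end
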